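/- arXiv:2102.06817 — 4 statements merged into one kernel-verified Lean document; each statement's English description precedes it below -/
import Mathlib

section
/- Let K ∈ (0,1). Then the random variable Z = Tr(A(Σ_n − Σ)) is centered and sub-exponential with parameters ν² = 2‖AΣ‖_F²/(n(1−K)) and b = 2‖AΣ‖_∞/(nK); explicitly, E[exp(t·Tr(A(Σ_n − Σ)))] ≤ exp(t²‖AΣ‖_F²/(n(1−K))) for all real t with |t| ≤ nK/(2‖AΣ‖_∞). -/
open MeasureTheory Matrix Real
open scoped ENNReal BigOperators NNReal

noncomputable def gaussianPDF {p : ℕ} (C : Matrix (Fin p) (Fin p) ℝ) (x : Fin p → ℝ) : ℝ≥0∞ :=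
  ENNReal.ofReal ((2 * Real.pi) ^ (-(p : ℝ) / 2) * C.det ^ (-(1:ℝ)/2) *
    Real.exp (-(1/2) * (x ⬝ᵥ C⁻¹.mulVec x)))

/-- The centered multivariate Gaussian measure `N_p(0, C)` on `Fin p → ℝ`. -/
noncomputable def gaussianMeasure {p : ℕ} (C : Matrix (Fin p) (Fin p) ℝ) :
    Measure (Fin p → ℝ) :=
  MeasureTheory.volume.withDensity (gaussianPDF C)

/-- The law of `n` i.i.d. `N_p(0, C)` vectors. -/
noncomputable def iidGaussian (n p : ℕ) (C : Matrix (Fin p) (Fin p) ℝ) :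
    Measure (Fin n → Fin p → ℝ) :=
  MeasureTheory.volume.withDensity fun X => ∏ k, gaussianPDF C (X k)

/-- The sample covariance matrix `Σ_n = (1/n) ∑ X_k X_kᵀ`. -/
noncomputable def sampleCov {n p : ℕ} (X : Fin n → Fin p → ℝ) :
    Matrix (Fin p) (Fin p) ℝ :=
  (n : ℝ)⁻¹ • ∑ k, Matrix.of fun i j => X k i * X k j

/-- Frobenius norm of a matrix. -/
noncomputable def frobNorm {p : ℕ} (M : Matrix (Fin p) (Fin p) ℝ) : ℝ :=
  Real.sqrt (∑ i, ∑ j, (M i j)^2)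

/-- Spectral (ℓ²-operator) norm of a matrix. -/
noncomputable def specNorm {p : ℕ} (M : Matrix (Fin p) (Fin p) ℝ) : ℝ :=
  ‖Matrix.toEuclideanCLM (𝕜 := ℝ) M‖

/-- The matrix `A_j` with entries `1/(2(p-j))` on the `j`-th upper and lower diagonals. -/
noncomputable def lagMatrix (p j : ℕ) : Matrix (Fin p) (Fin p) ℝ :=
  Matrix.of fun k l => if ((k:ℤ) - (l:ℤ)).natAbs = j then 1/(2*((p:ℝ) - j)) else 0

/-- Two-sided class `F(s,S,σ)` of sparse Toeplitz covariance matrices with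
diagonal value `σ0`. -/
def memF (p s S : ℕ) (σ σ0 : ℝ) (C : Matrix (Fin p) (Fin p) ℝ) : Prop :=
  C.PosDef ∧ ∃ v : ℕ → ℝ, v 0 = σ0 ∧
    (∀ i j : Fin p, C i j = v ((i:ℤ) - (j:ℤ)).natAbs) ∧
    ∃ T : Finset ℕ, T ⊆ Finset.Icc 1 S ∧ T.card = s ∧
      (∀ j ∈ T, σ ≤ |v j|) ∧ (∀ j, 1 ≤ j → j ≤ p - 1 → j ∉ T → v j = 0)

/-- One-sided class `F₊(s,S,σ)` of sparse Toeplitz covariance matrices with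
diagonal value `σ0`. -/
def memFplus (p s S : ℕ) (σ σ0 : ℝ) (C : Matrix (Fin p) (Fin p) ℝ) : Prop :=
  C.PosDef ∧ ∃ v : ℕ → ℝ, v 0 = σ0 ∧
    (∀ i j : Fin p, C i j = v ((i:ℤ) - (j:ℤ)).natAbs) ∧
    ∃ T : Finset ℕ, T ⊆ Finset.Icc 1 S ∧ T.card = s ∧
      (∀ j ∈ T, σ ≤ v j) ∧ (∀ j, 1 ≤ j → j ≤ p - 1 → j ∉ T → v j = 0)

/-!
Write `Σ = M Mᵀ` with `Mᵀ A M = diag d`, so that `X_k = M Y_k` with `Y_k` standard Gaussian. Then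
`Tr (A (Σ_n - Σ)) = ∑ k, ∑ i, (d i / n) (Y_k i ^ 2 - 1)` is a weighted sum of independent centered
`χ²` variables, each of which is sub-exponential because
`-log (1 - x) ≤ x + x² / (2 (1 - |x|))`. The weights `d` are the eigenvalues of `A Σ`, which gives
`∑ d i ^ 2 ≤ ‖A Σ‖_F²` and `|d i| ≤ ‖A Σ‖_∞`. Both inequalities can be strict, as `A Σ` need not be
symmetric.
-/

open ProbabilityTheory (mgf gaussianReal integrableExpSet)

lemma eventually_abs_mul_lt_one (b : ℝ) : ∀ᶠ t in nhds (0 : ℝ), |t| * b < 1 :=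
  ContinuousAt.eventually_lt (by fun_prop) continuousAt_const (by simp)

/-- `X` is sub-exponential with variance proxy `v` and scale `b`: its moment generating function is
at most `exp (v t² / 2)` for `|t| ≤ 1 / b`. The range of `t` is written `|t| * b ≤ 1`, so that
`b = 0` puts no restriction on `t`. The bound forces `X` to be centered, which is therefore not a
separate field. -/
structure HasSubexponentialMGF {Ω : Type*} {_ : MeasurableSpace Ω} (X : Ω → ℝ) (v b : ℝ)
    (μ : Measure Ω) : Prop where
  integrable_exp_mul : ∀ t, |t| * b ≤ 1 → Integrable (fun ω ↦ rexp (t * X ω)) μ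
  mgf_le : ∀ t, |t| * b ≤ 1 → mgf X μ t ≤ rexp (v * t ^ 2 / 2)

namespace HasSubexponentialMGF

variable {Ω : Type*} {mΩ : MeasurableSpace Ω} {μ : Measure Ω} {X : Ω → ℝ} {v b : ℝ}

lemma mono {v' b' : ℝ} (hX : HasSubexponentialMGF X v b μ) (hv : v ≤ v') (hb : b ≤ b') :
    HasSubexponentialMGF X v' b' μ where
  integrable_exp_mul t ht := hX.integrable_exp_mul t <| ht.trans' (by gcongr)
  mgf_le t ht := (hX.mgf_le t <| ht.trans' (by gcongr)).trans (by gcongr)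

lemma const_mul (hX : HasSubexponentialMGF X v b μ) (c : ℝ) :
    HasSubexponentialMGF (fun ω ↦ c * X ω) (c ^ 2 * v) (|c| * b) μ where
  integrable_exp_mul t ht := by
    simpa only [mul_assoc] using
      hX.integrable_exp_mul (t * c) (by rwa [abs_mul, mul_assoc])
  mgf_le t ht := by
    rw [ProbabilityTheory.mgf_const_mul]
    convert hX.mgf_le (c * t) (by rwa [abs_mul, mul_comm |c|, mul_assoc]) using 2
    ring

lemma map {Ω' : Type*} {_ : MeasurableSpace Ω'} {f : Ω → Ω'} {Y : Ω' → ℝ}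
    (hf : AEMeasurable f μ) (hY : AEMeasurable Y (μ.map f))
    (h : HasSubexponentialMGF (Y ∘ f) v b μ) : HasSubexponentialMGF Y v b (μ.map f) where
  integrable_exp_mul t ht :=
    (integrable_map_measure (hY.const_mul t).exp.aestronglyMeasurable hf).mpr
      (h.integrable_exp_mul t ht)
  mgf_le t ht := by
    rw [ProbabilityTheory.mgf_map hf (hY.const_mul t).exp.aestronglyMeasurable]
    exact h.mgf_le t ht

lemma sum_pi {ι : Type*} [Fintype ι] {Ω : ι → Type*} {_ : ∀ i, MeasurableSpace (Ω i)}
    {μ : ∀ i, Measure (Ω i)} [∀ i, SigmaFinite (μ i)] {X : ∀ i, Ω i → ℝ} {v : ι → ℝ}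
    (h : ∀ i, HasSubexponentialMGF (X i) (v i) b (μ i)) :
    HasSubexponentialMGF (fun ω ↦ ∑ i, X i (ω i)) (∑ i, v i) b (Measure.pi μ) where
  integrable_exp_mul t ht := by
    simpa only [Finset.mul_sum, exp_sum] using
      Integrable.fintype_prod_dep fun i ↦ (h i).integrable_exp_mul t ht
  mgf_le t ht := by
    calc mgf (fun ω ↦ ∑ i, X i (ω i)) (Measure.pi μ) t
      _ = ∏ i, mgf (X i) (μ i) t := by
        simp only [mgf, Finset.mul_sum, exp_sum]
        exact integral_fintype_prod_eq_prod fun i ω ↦ rexp (t * X i ω)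
      _ ≤ ∏ i, rexp (v i * t ^ 2 / 2) :=
        Finset.prod_le_prod (fun i _ ↦ ProbabilityTheory.mgf_nonneg) fun i _ ↦ (h i).mgf_le t ht
      _ = rexp ((∑ i, v i) * t ^ 2 / 2) := by
        rw [← exp_sum, Finset.sum_mul, Finset.sum_div]

lemma zero_mem_interior_integrableExpSet (hX : HasSubexponentialMGF X v b μ) :
    0 ∈ interior (integrableExpSet X μ) :=
  mem_interior_iff_mem_nhds.mpr <|
    (eventually_abs_mul_lt_one b).mono fun t ht ↦ hX.integrable_exp_mul t ht.le

lemma integral_eq_zero [IsProbabilityMeasure μ] (hX : HasSubexponentialMGF X v b μ) :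
    ∫ ω, X ω ∂μ = 0 := by
  -- The mgf touches its upper bound at `0`, so the two have the same derivative there.
  have hmax : IsLocalMax (fun t ↦ mgf X μ t - rexp (v * t ^ 2 / 2)) 0 := by
    filter_upwards [eventually_abs_mul_lt_one b] with t ht
    simpa using hX.mgf_le t ht.le
  have hmgf : HasDerivAt (mgf X μ) (∫ ω, X ω ∂μ) 0 := by
    simpa using ProbabilityTheory.hasDerivAt_mgf hX.zero_mem_interior_integrableExpSet
  have hbound : HasDerivAt (fun t : ℝ ↦ rexp (v * t ^ 2 / 2)) 0 0 := by
    simpa using ((((hasDerivAt_id (0 : ℝ)).pow 2).const_mul v).div_const 2).exp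
  simpa using hmax.hasDerivAt_eq_zero (hmgf.sub hbound)

end HasSubexponentialMGF

lemma neg_log_one_sub_le {x : ℝ} (hx : |x| < 1) :
    -log (1 - x) ≤ x + x ^ 2 / (2 * (1 - |x|)) := by
  have hlog := (hasSum_nat_add_iff' 1).mpr (hasSum_pow_div_log_of_abs_lt_one hx)
  have hgeom := (hasSum_geometric_of_lt_one (abs_nonneg x) hx).mul_left (x ^ 2 / 2)
  have hterm (n : ℕ) : x ^ (n + 1 + 1) / ((n + 1 : ℕ) + 1 : ℝ) ≤ x ^ 2 / 2 * |x| ^ n :=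
    calc x ^ (n + 1 + 1) / ((n + 1 : ℕ) + 1 : ℝ)
      _ ≤ |x| ^ (n + 1 + 1) / ((n + 1 : ℕ) + 1 : ℝ) := by
        rw [← abs_pow]
        gcongr
        exact le_abs_self _
      _ ≤ |x| ^ (n + 1 + 1) / 2 := by
        gcongr
        push_cast
        linarith [n.cast_nonneg (α := ℝ)]
      _ = x ^ 2 / 2 * |x| ^ n := by rw [← sq_abs x]; ring
  have hle := hasSum_le hterm hlog hgeom
  rw [← div_eq_mul_inv, div_div] at hle
  simp only [Finset.sum_range_one, zero_add, pow_one, Nat.cast_zero, div_one] at hle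
  linarith

lemma mgf_sq_gaussianReal {v : ℝ≥0} {s : ℝ} (hs : 2 * v * s < 1) :
    mgf (fun y ↦ y ^ 2) (gaussianReal 0 v) s = (√(1 - 2 * v * s))⁻¹ := by
  obtain rfl | hv := eq_or_ne v 0
  · simp [mgf]
  have hdensity (y : ℝ) : ProbabilityTheory.gaussianPDFReal 0 v y • rexp (s * y ^ 2) =
      (√(2 * π * v))⁻¹ * rexp (-((1 - 2 * v * s) / (2 * v)) * y ^ 2) := by
    rw [ProbabilityTheory.gaussianPDFReal, smul_eq_mul, mul_assoc, ← exp_add]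
    congr 2
    field_simp
    ring
  have hquot : π / ((1 - 2 * v * s) / (2 * v)) = 2 * π * v / (1 - 2 * v * s) := by
    field_simp
  rw [mgf, ProbabilityTheory.integral_gaussianReal_eq_integral_smul hv]
  simp only [hdensity]
  rw [integral_const_mul, integral_gaussian, hquot, sqrt_div (by positivity)]
  field_simp

lemma integrable_exp_mul_sq_gaussianReal {v : ℝ≥0} {s : ℝ} (hs : 2 * v * s < 1) :
    Integrable (fun y ↦ rexp (s * y ^ 2)) (gaussianReal 0 v) := by
  rw [← ProbabilityTheory.mgf_pos_iff, mgf_sq_gaussianReal hs]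
  exact inv_pos.mpr (sqrt_pos.mpr (by linarith))

lemma mgf_sq_gaussianReal_le {v : ℝ≥0} {s : ℝ} (hs : 2 * v * |s| < 1) :
    mgf (fun y ↦ y ^ 2) (gaussianReal 0 v) s ≤
      rexp (v * s + (v * s) ^ 2 / (1 - 2 * v * |s|)) := by
  have habs : |2 * v * s| = 2 * v * |s| := by
    rw [abs_mul, abs_of_nonneg (by positivity : (0 : ℝ) ≤ 2 * v)]
  have hlt : 2 * v * s < 1 := (le_abs_self _).trans_lt (habs ▸ hs)
  have hlog := neg_log_one_sub_le (habs ▸ hs)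
  have hpos : 0 < 1 - 2 * v * s := by linarith
  rw [habs] at hlog
  rw [mgf_sq_gaussianReal hlt, ← exp_log (sqrt_pos.mpr hpos), ← exp_neg, log_sqrt hpos.le,
    exp_le_exp]
  calc -(log (1 - 2 * v * s) / 2)
    _ ≤ (2 * v * s + (2 * v * s) ^ 2 / (2 * (1 - 2 * v * |s|))) / 2 := by linarith
    _ = v * s + (v * s) ^ 2 / (1 - 2 * v * |s|) := by
      have : 1 - 2 * v * |s| ≠ 0 := by linarith
      field_simp

lemma hasSubexponentialMGF_sq_sub_gaussianReal (v : ℝ≥0) {K : ℝ} (hK : K ∈ Set.Ioo 0 1) :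
    HasSubexponentialMGF (fun y ↦ y ^ 2 - v) (2 * v ^ 2 / (1 - K)) (2 * v / K)
      (gaussianReal 0 v) := by
  obtain ⟨hK0, hK1⟩ := hK
  have hrange {t : ℝ} (ht : |t| * (2 * v / K) ≤ 1) : 2 * v * |t| ≤ K := by
    rwa [mul_div_assoc', div_le_one hK0, mul_comm] at ht
  refine ⟨fun t ht ↦ ?_, fun t ht ↦ ?_⟩
  · have hlt : 2 * v * t < 1 := by
      calc 2 * v * t ≤ 2 * v * |t| := by gcongr; exact le_abs_self t
        _ < 1 := (hrange ht).trans_lt hK1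
    simpa only [mul_sub, exp_sub] using (integrable_exp_mul_sq_gaussianReal hlt).div_const _
  · have : 0 < 1 - K := by linarith
    calc mgf (fun y ↦ y ^ 2 - (v : ℝ)) (gaussianReal 0 v) t
      _ = mgf (fun y ↦ y ^ 2) (gaussianReal 0 v) t * rexp (t * -v) := by
        simp only [sub_eq_add_neg, ProbabilityTheory.mgf_add_const]
      _ ≤ rexp (v * t + (v * t) ^ 2 / (1 - 2 * v * |t|)) * rexp (t * -v) := by
        gcongr
        exact mgf_sq_gaussianReal_le ((hrange ht).trans_lt hK1)
      _ = rexp ((v * t) ^ 2 / (1 - 2 * v * |t|)) := by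
        rw [← exp_add]
        ring_nf
      _ ≤ rexp ((v * t) ^ 2 / (1 - K)) := by
        gcongr
        exact hrange ht
      _ = rexp (2 * v ^ 2 / (1 - K) * t ^ 2 / 2) := by ring_nf

section Diagonalization

variable {m : Type*} [Fintype m]

lemma trace_mul_conj {R : Type*} [CommSemiring R] (A M S : Matrix m m R) :
    trace (A * (M * S * Mᵀ)) = trace (Mᵀ * A * M * S) := by
  rw [← Matrix.mul_assoc, trace_mul_comm]
  simp only [Matrix.mul_assoc]

variable [DecidableEq m]

open scoped ComplexOrder MatrixOrder Matrix.Norms.L2Operator in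
lemma exists_isUnit_and_mul_conjTranspose_eq {𝕜 : Type*} [RCLike 𝕜] {C : Matrix m m 𝕜}
    (hC : C.PosDef) : ∃ M : Matrix m m 𝕜, IsUnit M ∧ M * Mᴴ = C := by
  obtain ⟨M, hM, hMC⟩ :=
    CStarAlgebra.isStrictlyPositive_iff_eq_mul_star_self.mp hC.isStrictlyPositive
  exact ⟨M, hM, hMC.symm⟩

open scoped ComplexOrder in
lemma exists_mul_conjTranspose_eq_and_conj_eq_diagonal {𝕜 : Type*} [RCLike 𝕜]
    {C A : Matrix m m 𝕜} (hC : C.PosDef) (hA : A.IsHermitian) :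
    ∃ (M : Matrix m m 𝕜) (d : m → ℝ),
      IsUnit M ∧ M * Mᴴ = C ∧ Mᴴ * A * M = diagonal (RCLike.ofReal ∘ d) := by
  obtain ⟨B, hB, hBC⟩ := exists_isUnit_and_mul_conjTranspose_eq hC
  have hS : (Bᴴ * A * B).IsHermitian := isHermitian_conjTranspose_mul_mul B hA
  let U : Matrix m m 𝕜 := hS.eigenvectorUnitary
  refine ⟨B * U, hS.eigenvalues, hB.mul (Unitary.toUnits hS.eigenvectorUnitary).isUnit, ?_, ?_⟩
  · calc (B * U) * (B * U)ᴴ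
      _ = B * (U * star U) * Bᴴ := by
        simp only [conjTranspose_mul, star_eq_conjTranspose, Matrix.mul_assoc]
      _ = C := by
        rw [Unitary.mul_star_self_of_mem hS.eigenvectorUnitary.2, Matrix.mul_one, hBC]
  · rw [← hS.conjStarAlgAut_star_eigenvectorUnitary, Unitary.conjStarAlgAut_star_apply,
      conjTranspose_mul, star_eq_conjTranspose]
    simp only [Matrix.mul_assoc, U]

lemma exists_mul_transpose_eq_and_conj_eq_diagonal {C A : Matrix m m ℝ} (hC : C.PosDef)
    (hA : A.IsSymm) :
    ∃ (M : Matrix m m ℝ) (d : m → ℝ), IsUnit M ∧ M * Mᵀ = C ∧ Mᵀ * A * M = diagonal d := by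
  simpa using exists_mul_conjTranspose_eq_and_conj_eq_diagonal hC
    ((conjTranspose_eq_transpose_of_trivial A).trans hA)

lemma mul_mul_transpose_eq_inv_mul_mul {R : Type*} [CommRing R] {A M D : Matrix m m R}
    (hM : IsUnit M) (hD : Mᵀ * A * M = D) : A * (M * Mᵀ) = Mᵀ⁻¹ * D * Mᵀ := by
  have hMT : IsUnit Mᵀ.det := by rwa [det_transpose, ← isUnit_iff_isUnit_det]
  simp only [← hD, Matrix.mul_assoc, nonsing_inv_mul_cancel_left _ _ hMT]

lemma spectrum_mul_mul_transpose {R : Type*} [Field R] {A M : Matrix m m R} {d : m → R}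
    (hM : IsUnit M) (hd : Mᵀ * A * M = diagonal d) :
    spectrum R (A * (M * Mᵀ)) = Set.range d := by
  obtain ⟨P, hP⟩ : IsUnit Mᵀ := (isUnit_transpose M).mpr hM
  rw [mul_mul_transpose_eq_inv_mul_mul hM hd, ← hP, ← coe_units_inv, spectrum.units_conjugate',
    spectrum_diagonal]

lemma trace_mul_mul_transpose_sq {R : Type*} [CommSemiring R] {A M : Matrix m m R} {d : m → R}
    (hd : Mᵀ * A * M = diagonal d) : trace ((A * (M * Mᵀ)) ^ 2) = ∑ i, d i ^ 2 :=
  calc trace ((A * (M * Mᵀ)) ^ 2)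
    _ = trace (A * (M * (Mᵀ * A * M) * Mᵀ)) := by simp only [pow_two, Matrix.mul_assoc]
    _ = trace (diagonal d * diagonal d) := by rw [trace_mul_conj, hd]
    _ = ∑ i, d i ^ 2 := by simp only [diagonal_mul_diagonal, trace_diagonal, pow_two]

end Diagonalization

lemma lintegral_fin_prod_eq_prod {n : ℕ} {E : Fin n → Type*} {mE : ∀ i, MeasurableSpace (E i)}
    {μ : ∀ i, Measure (E i)} [∀ i, SigmaFinite (μ i)] {f : ∀ i, E i → ℝ≥0∞}
    (hf : ∀ i, Measurable (f i)) :
    ∫⁻ x, ∏ i, f i (x i) ∂Measure.pi μ = ∏ i, ∫⁻ x, f i x ∂μ i := by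
  induction n with
  | zero => simp
  | succ n ih =>
    have hmeas : Measurable fun x : ∀ i, E i ↦ ∏ i, f i (x i) := by fun_prop
    have htail : Measurable fun x : ∀ i : Fin n, E i.succ ↦ ∏ i : Fin n, f i.succ (x i) := by
      fun_prop
    rw [← (measurePreserving_piFinSuccAbove μ 0).symm.lintegral_comp hmeas, Fin.prod_univ_succ,
      ← ih fun i ↦ hf i.succ, ← lintegral_prod_mul (hf 0).aemeasurable htail.aemeasurable]
    simp only [Fin.prod_univ_succ]
    rfl

section FiniteProduct

variable {ι : Type*} [Fintype ι] {E : ι → Type*} {mE : ∀ i, MeasurableSpace (E i)}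
  {μ : ∀ i, Measure (E i)} [∀ i, SigmaFinite (μ i)] {f : ∀ i, E i → ℝ≥0∞}

lemma lintegral_fintype_prod_eq_prod (hf : ∀ i, Measurable (f i)) :
    ∫⁻ x, ∏ i, f i (x i) ∂Measure.pi μ = ∏ i, ∫⁻ x, f i x ∂μ i := by
  let e := (Fintype.equivFin ι).symm
  have hmeas : Measurable fun x : ∀ i, E i ↦ ∏ i, f i (x i) := by fun_prop
  rw [← (measurePreserving_piCongrLeft μ e).lintegral_comp hmeas]
  simp_rw [← e.prod_comp, MeasurableEquiv.coe_piCongrLeft, Equiv.piCongrLeft_apply_apply]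
  exact lintegral_fin_prod_eq_prod fun i ↦ hf (e i)

lemma pi_withDensity [∀ i, SigmaFinite ((μ i).withDensity (f i))]
    (hf : ∀ i, Measurable (f i)) :
    Measure.pi (fun i ↦ (μ i).withDensity (f i)) =
      (Measure.pi μ).withDensity fun x ↦ ∏ i, f i (x i) := by
  refine Measure.pi_eq fun s hs ↦ ?_
  rw [withDensity_apply _ (MeasurableSet.univ_pi hs), Measure.restrict_pi_pi,
    lintegral_fintype_prod_eq_prod hf]
  simp only [withDensity_apply _ (hs _)]

end FiniteProduct

lemma map_withDensity_comp {α β : Type*} {mα : MeasurableSpace α} {mβ : MeasurableSpace β}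
    {μ : Measure α} {g : α → β} {f : β → ℝ≥0∞} (hg : Measurable g) (hf : Measurable f) :
    (μ.withDensity fun x ↦ f (g x)).map g = (μ.map g).withDensity f := by
  ext s hs
  rw [Measure.map_apply hg hs, withDensity_apply _ (hg hs), withDensity_apply _ hs,
    setLIntegral_map hs hf hg]

@[fun_prop]
lemma measurable_mulVec {m n : Type*} [Fintype n] (M : Matrix m n ℝ) :
    Measurable (M *ᵥ · : (n → ℝ) → m → ℝ) := by
  unfold mulVec dotProduct
  fun_prop

section GaussianMeasure

variable {p : ℕ} {C M : Matrix (Fin p) (Fin p) ℝ}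

lemma measurable_gaussianPDF (C : Matrix (Fin p) (Fin p) ℝ) : Measurable (gaussianPDF C) := by
  unfold gaussianPDF mulVec dotProduct
  fun_prop

lemma gaussianPDF_one (x : Fin p → ℝ) :
    gaussianPDF 1 x = ∏ i, ProbabilityTheory.gaussianPDF 0 1 (x i) := by
  have hexp : rexp (-(1 / 2) * (x ⬝ᵥ x)) = ∏ i, rexp (-(x i) ^ 2 / 2) := by
    rw [← exp_sum, dotProduct, Finset.mul_sum]
    congr! 2 with i
    ring
  have hconst : (2 * π) ^ (-(p : ℝ) / 2) = ∏ _i : Fin p, (√(2 * π))⁻¹ := by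
    rw [Finset.prod_const, Finset.card_univ, Fintype.card_fin, sqrt_eq_rpow,
      ← rpow_neg (by positivity), ← rpow_natCast, ← rpow_mul (by positivity)]
    ring_nf
  simp only [gaussianPDF, ProbabilityTheory.gaussianPDF, ProbabilityTheory.gaussianPDFReal]
  rw [← ENNReal.ofReal_prod_of_nonneg fun i _ ↦ by positivity]
  simp only [NNReal.coe_one, mul_one, sub_zero, Finset.prod_mul_distrib, ← hexp, ← hconst, det_one,
    one_rpow, inv_one, one_mulVec]

lemma gaussianMeasure_one :
    gaussianMeasure (1 : Matrix (Fin p) (Fin p) ℝ) = Measure.pi fun _ ↦ gaussianReal 0 1 := by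
  have hreal := ProbabilityTheory.gaussianReal_of_var_ne_zero 0 (one_ne_zero (α := ℝ≥0))
  have : SigmaFinite (volume.withDensity (ProbabilityTheory.gaussianPDF 0 1)) :=
    hreal ▸ inferInstance
  rw [gaussianMeasure, hreal,
    pi_withDensity fun _ ↦ ProbabilityTheory.measurable_gaussianPDF 0 1, volume_pi]
  congr with x
  exact gaussianPDF_one x

lemma gaussianPDF_conj_mulVec (hC : 0 ≤ C.det) (hM : M.det ≠ 0) (x : Fin p → ℝ) :
    ENNReal.ofReal |M.det| * gaussianPDF (M * C * Mᵀ) (M *ᵥ x) = gaussianPDF C x := by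
  have hunit : IsUnit M.det := hM.isUnit
  have hpos : 0 < |M.det| := abs_pos.mpr hM
  have hdet : (M * C * Mᵀ).det ^ (-(1 : ℝ) / 2) = |M.det|⁻¹ * C.det ^ (-(1 : ℝ) / 2) := by
    have : (M * C * Mᵀ).det = |M.det| ^ (2 : ℝ) * C.det := by
      rw [det_mul, det_mul, det_transpose, rpow_two, sq_abs]
      ring
    rw [this, mul_rpow (by positivity) hC, ← rpow_mul hpos.le, ← rpow_neg_one]
    norm_num
  have hquad : M *ᵥ x ⬝ᵥ (M * C * Mᵀ)⁻¹ *ᵥ (M *ᵥ x) = x ⬝ᵥ C⁻¹ *ᵥ x := by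
    have hinv : Mᵀ * (M * C * Mᵀ)⁻¹ * M = C⁻¹ := by
      rw [Matrix.mul_inv_rev, Matrix.mul_inv_rev, ← Matrix.mul_assoc, ← Matrix.mul_assoc,
        mul_nonsing_inv _ (by rwa [det_transpose]), Matrix.one_mul, Matrix.mul_assoc,
        nonsing_inv_mul _ hunit, Matrix.mul_one]
    rw [← hinv, ← vecMul_transpose, ← dotProduct_mulVec, vecMul_transpose, mulVec_mulVec,
      mulVec_mulVec, Matrix.mul_assoc]
  rw [gaussianPDF, gaussianPDF, hdet, hquad, ← ENNReal.ofReal_mul hpos.le]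
  congr 1
  field_simp

lemma gaussianMeasure_conj (hC : 0 ≤ C.det) (hM : M.det ≠ 0) :
    gaussianMeasure (M * C * Mᵀ) = (gaussianMeasure C).map (M *ᵥ ·) := by
  have hpdf := measurable_gaussianPDF (M * C * Mᵀ)
  have hvolume : (volume : Measure (Fin p → ℝ)).map (M *ᵥ ·) =
      ENNReal.ofReal |M.det|⁻¹ • volume := by
    rw [← abs_inv]
    exact map_matrix_volume_pi_eq_smul_volume_pi hM
  have hpos : 0 < |M.det| := abs_pos.mpr hM
  symm
  calc (gaussianMeasure C).map (M *ᵥ ·)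
    _ = (volume.withDensity fun x ↦
          (ENNReal.ofReal |M.det| • gaussianPDF (M * C * Mᵀ)) (M *ᵥ x)).map (M *ᵥ ·) := by
      simp only [Pi.smul_apply, smul_eq_mul, gaussianPDF_conj_mulVec hC hM, gaussianMeasure]
    _ = (volume.map (M *ᵥ ·)).withDensity
          (ENNReal.ofReal |M.det| • gaussianPDF (M * C * Mᵀ)) :=
      map_withDensity_comp (measurable_mulVec M) (hpdf.const_smul _)
    _ = gaussianMeasure (M * C * Mᵀ) := by
      rw [hvolume, withDensity_smul_measure, withDensity_smul _ hpdf, smul_smul,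
        ← ENNReal.ofReal_mul (by positivity), inv_mul_cancel₀ hpos.ne', ENNReal.ofReal_one,
        one_smul, gaussianMeasure]

lemma gaussianMeasure_mul_transpose (hM : M.det ≠ 0) :
    gaussianMeasure (M * Mᵀ) = (Measure.pi fun _ ↦ gaussianReal 0 1).map (M *ᵥ ·) := by
  rw [← gaussianMeasure_one, ← gaussianMeasure_conj (by simp) hM, Matrix.mul_one]

instance sigmaFinite_gaussianMeasure : SigmaFinite (gaussianMeasure C) :=
  SigmaFinite.withDensity_ofReal _

lemma iidGaussian_eq_pi (n : ℕ) (C : Matrix (Fin p) (Fin p) ℝ) :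
    iidGaussian n p C = Measure.pi fun _ ↦ gaussianMeasure C :=
  have : SigmaFinite (volume.withDensity (gaussianPDF C)) := sigmaFinite_gaussianMeasure
  (pi_withDensity fun _ ↦ measurable_gaussianPDF C).symm

lemma iidGaussian_mul_transpose (n : ℕ) (hM : M.det ≠ 0) :
    iidGaussian n p (M * Mᵀ) =
      (Measure.pi fun _ ↦ Measure.pi fun _ ↦ gaussianReal 0 1).map fun Y k ↦ M *ᵥ Y k := by
  have hmeas : Measurable (M *ᵥ ·) := measurable_mulVec M
  have : IsProbabilityMeasure ((Measure.pi fun _ ↦ gaussianReal 0 1).map (M *ᵥ ·)) :=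
    Measure.isProbabilityMeasure_map hmeas.aemeasurable
  rw [iidGaussian_eq_pi, gaussianMeasure_mul_transpose hM,
    Measure.pi_map_pi fun _ ↦ hmeas.aemeasurable]

lemma isProbabilityMeasure_iidGaussian (n : ℕ) (hC : C.PosDef) :
    IsProbabilityMeasure (iidGaussian n p C) := by
  obtain ⟨M, hM, rfl⟩ := exists_isUnit_and_mul_conjTranspose_eq hC
  have hmeas : Measurable fun (Y : Fin n → Fin p → ℝ) k ↦ M *ᵥ Y k := by fun_prop
  rw [conjTranspose_eq_transpose_of_trivial, iidGaussian_mul_transpose n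
    ((isUnit_iff_isUnit_det M).mp hM).ne_zero]
  exact Measure.isProbabilityMeasure_map hmeas.aemeasurable

end GaussianMeasure

section SampleCovariance

variable {n p : ℕ} {A M : Matrix (Fin p) (Fin p) ℝ} {d : Fin p → ℝ}

lemma abs_le_specNorm_of_mem_spectrum {N : Matrix (Fin p) (Fin p) ℝ} {c : ℝ}
    (hc : c ∈ spectrum ℝ N) : |c| ≤ specNorm N := by
  rw [← AlgEquiv.spectrum_eq (toEuclideanCLM (n := Fin p) (𝕜 := ℝ)) N] at hc
  calc |c| ≤ specNorm N * ‖(1 : EuclideanSpace ℝ (Fin p) →L[ℝ] EuclideanSpace ℝ (Fin p))‖ :=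
        spectrum.norm_le_norm_mul_of_mem hc
    _ ≤ specNorm N := mul_le_of_le_one_right (norm_nonneg _) ContinuousLinearMap.norm_id_le

lemma trace_sq_le_frobNorm_sq (N : Matrix (Fin p) (Fin p) ℝ) : trace (N ^ 2) ≤ frobNorm N ^ 2 := by
  rw [frobNorm, sq_sqrt (by positivity)]
  calc trace (N ^ 2)
    _ = ∑ i, ∑ j, N i j * N j i := by simp only [pow_two, trace, diag_apply, mul_apply]
    _ ≤ ∑ i, ∑ j, (N i j ^ 2 + N j i ^ 2) / 2 := by
      gcongr with i _ j _
      linarith [two_mul_le_add_sq (N i j) (N j i)]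
    _ = ∑ i, ∑ j, N i j ^ 2 := by
      have hswap : ∑ i, ∑ j, N j i ^ 2 = ∑ i, ∑ j, N i j ^ 2 := Finset.sum_comm
      simp only [← Finset.sum_div, Finset.sum_add_distrib, hswap]
      ring

lemma abs_le_specNorm_mul_mul_transpose (hM : IsUnit M) (hd : Mᵀ * A * M = diagonal d)
    (i : Fin p) : |d i| ≤ specNorm (A * (M * Mᵀ)) :=
  abs_le_specNorm_of_mem_spectrum <| spectrum_mul_mul_transpose hM hd ▸ Set.mem_range_self i

lemma sum_sq_le_frobNorm_mul_mul_transpose_sq (hd : Mᵀ * A * M = diagonal d) :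
    ∑ i, d i ^ 2 ≤ frobNorm (A * (M * Mᵀ)) ^ 2 :=
  trace_mul_mul_transpose_sq hd ▸ trace_sq_le_frobNorm_sq _

lemma continuous_sampleCov : Continuous (sampleCov : (Fin n → Fin p → ℝ) → _) := by
  unfold sampleCov
  fun_prop

lemma sampleCov_mulVec (M : Matrix (Fin p) (Fin p) ℝ) (Y : Fin n → Fin p → ℝ) :
    sampleCov (fun k ↦ M *ᵥ Y k) = M * sampleCov Y * Mᵀ := by
  change (n : ℝ)⁻¹ • ∑ k, vecMulVec (M *ᵥ Y k) (M *ᵥ Y k) =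
    M * ((n : ℝ)⁻¹ • ∑ k, vecMulVec (Y k) (Y k)) * Mᵀ
  simp only [Matrix.mul_smul, Matrix.smul_mul, Matrix.mul_sum, Matrix.sum_mul, mul_vecMulVec,
    vecMulVec_mul, vecMul_transpose]

lemma sampleCov_sub_one_apply_self (hn : 0 < n) (Y : Fin n → Fin p → ℝ) (i : Fin p) :
    (sampleCov Y - 1) i i = (n : ℝ)⁻¹ * ∑ k, (Y k i ^ 2 - 1) := by
  have hn' : (n : ℝ) ≠ 0 := by positivity
  simp only [sampleCov, Matrix.sub_apply, Matrix.smul_apply, Matrix.sum_apply, of_apply,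
    one_apply_eq, smul_eq_mul, ← pow_two, Finset.sum_sub_distrib, Finset.sum_const,
    Finset.card_univ, Fintype.card_fin, nsmul_eq_mul, mul_one, mul_sub, inv_mul_cancel₀ hn']

lemma trace_mul_sampleCov_mulVec_sub (hn : 0 < n) (hd : Mᵀ * A * M = diagonal d)
    (Y : Fin n → Fin p → ℝ) :
    trace (A * (sampleCov (fun k ↦ M *ᵥ Y k) - M * Mᵀ)) =
      ∑ k, ∑ i, d i / n * (Y k i ^ 2 - 1) :=
  calc trace (A * (sampleCov (fun k ↦ M *ᵥ Y k) - M * Mᵀ))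
    _ = trace (A * (M * (sampleCov Y - 1) * Mᵀ)) := by
      rw [sampleCov_mulVec, Matrix.mul_sub M, Matrix.sub_mul, Matrix.mul_one]
    _ = ∑ i, d i * (sampleCov Y - 1) i i := by
      rw [trace_mul_conj, hd]
      simp only [trace, diag_apply, diagonal_mul]
    _ = ∑ k, ∑ i, d i / n * (Y k i ^ 2 - 1) := by
      rw [Finset.sum_comm]
      simp only [sampleCov_sub_one_apply_self hn, Finset.mul_sum, div_eq_mul_inv, mul_assoc]

lemma hasSubexponentialMGF_sum_mul_sq_sub_one {ι : Type*} [Fintype ι] {c : ι → ℝ} {B K : ℝ}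
    (hc : ∀ i, |c i| ≤ B) (hK : K ∈ Set.Ioo 0 1) :
    HasSubexponentialMGF (fun y ↦ ∑ i, c i * (y i ^ 2 - 1)) (2 * (∑ i, c i ^ 2) / (1 - K))
      (2 * B / K) (Measure.pi fun _ ↦ gaussianReal 0 1) := by
  obtain ⟨hK0, hK1⟩ := hK
  have hterm (i : ι) : HasSubexponentialMGF (fun y ↦ c i * (y ^ 2 - 1)) (2 * c i ^ 2 / (1 - K))
      (2 * B / K) (gaussianReal 0 1) := by
    refine ((hasSubexponentialMGF_sq_sub_gaussianReal 1 ⟨hK0, hK1⟩).const_mul (c i)).mono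
      (le_of_eq ?_) ?_
    · push_cast
      ring
    · calc |c i| * (2 * (1 : ℝ≥0) / K) = 2 * |c i| / K := by
            push_cast
            ring
        _ ≤ 2 * B / K := by gcongr; exact hc i
  rw [Finset.mul_sum, Finset.sum_div]
  exact HasSubexponentialMGF.sum_pi hterm

lemma hasSubexponentialMGF_trace_sampleCov {C : Matrix (Fin p) (Fin p) ℝ} {K : ℝ} (hn : 0 < n)
    (hC : C.PosDef) (hA : A.IsSymm) (hK : K ∈ Set.Ioo 0 1) :
    HasSubexponentialMGF (fun X ↦ trace (A * (sampleCov X - C)))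
      (2 * frobNorm (A * C) ^ 2 / (n * (1 - K))) (2 * specNorm (A * C) / (n * K))
      (iidGaussian n p C) := by
  obtain ⟨M, d, hM, rfl, hd⟩ := exists_mul_transpose_eq_and_conj_eq_diagonal hC hA
  have hdet : M.det ≠ 0 := ((isUnit_iff_isUnit_det M).mp hM).ne_zero
  have hmeas : Measurable fun (Y : Fin n → Fin p → ℝ) k ↦ M *ᵥ Y k := by fun_prop
  have hcont : Continuous fun X : Fin n → Fin p → ℝ ↦ trace (A * (sampleCov X - M * Mᵀ)) :=
    (continuous_const.matrix_mul (continuous_sampleCov.sub continuous_const)).matrix_trace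
  have hweight (i : Fin p) : |d i / n| ≤ specNorm (A * (M * Mᵀ)) / n := by
    rw [abs_div, Nat.abs_cast]
    gcongr
    exact abs_le_specNorm_mul_mul_transpose hM hd i
  rw [iidGaussian_mul_transpose n hdet]
  refine HasSubexponentialMGF.map hmeas.aemeasurable hcont.measurable.aemeasurable ?_
  simp only [Function.comp_def, trace_mul_sampleCov_mulVec_sub hn hd]
  refine (HasSubexponentialMGF.sum_pi fun _ ↦
    hasSubexponentialMGF_sum_mul_sq_sub_one hweight hK).mono ?_ (le_of_eq ?_)
  · have hK' : 0 < 1 - K := sub_pos.mpr hK.2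
    calc ∑ _k : Fin n, 2 * (∑ i, (d i / n) ^ 2) / (1 - K)
      _ = 2 * (∑ i, d i ^ 2) / (n * (1 - K)) := by
        simp only [div_pow, ← Finset.sum_div, Finset.sum_const, Finset.card_univ,
          Fintype.card_fin, nsmul_eq_mul]
        field_simp
      _ ≤ 2 * frobNorm (A * (M * Mᵀ)) ^ 2 / (n * (1 - K)) := by
        gcongr
        exact sum_sq_le_frobNorm_mul_mul_transpose_sq hd
  · rw [mul_div_assoc', div_div]

end SampleCovariance

/-- `Tr(A(Σ_n − Σ))` is centered and sub-exponential with parameters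
`ν² = 2‖AΣ‖_F²/(n(1−K))`, `b = 2‖AΣ‖_∞/(nK)`: its mgf satisfies
`E[exp(t·Tr(A(Σ_n − Σ)))] ≤ exp(t²‖AΣ‖_F²/(n(1−K)))` for `|t| ≤ nK/(2‖AΣ‖_∞)`. -/
theorem subexponential_trace_sampleCov {p n : ℕ} (hn : 0 < n)
    (Cov : Matrix (Fin p) (Fin p) ℝ) (hCov : Cov.PosDef)
    (A : Matrix (Fin p) (Fin p) ℝ) (hA : A.IsSymm) (hAC : A * Cov ≠ 0)
    (K : ℝ) (hK : K ∈ Set.Ioo (0:ℝ) 1) :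
    (∫ X, Matrix.trace (A * (sampleCov X - Cov)) ∂ iidGaussian n p Cov) = 0 ∧
    ∀ t : ℝ, |t| ≤ (n * K) / (2 * specNorm (A * Cov)) →
      (∫ X, Real.exp (t * Matrix.trace (A * (sampleCov X - Cov))) ∂ iidGaussian n p Cov)
        ≤ Real.exp ((2 * (frobNorm (A * Cov))^2 / (n * (1 - K))) * t^2 / 2) := by
  have hZ := hasSubexponentialMGF_trace_sampleCov hn hCov hA hK
  have := isProbabilityMeasure_iidGaussian n hCov
  refine ⟨hZ.integral_eq_zero, fun t ht ↦ hZ.mgf_le t ?_⟩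
  calc |t| * (2 * specNorm (A * Cov) / (n * K))
    _ = |t| / (n * K / (2 * specNorm (A * Cov))) := by rw [div_div_eq_mul_div, mul_div_assoc']
    _ ≤ 1 := div_le_one_of_le₀ ht ((abs_nonneg t).trans ht)
end

section
/- Let 1 ≤ s ≤ S ≤ p−1, let Σ ∈ F(s,S,σ) have diagonal value σ_0 > 0, let W ⊆ {1,…,S} be a set of w ≥ 1 elements, and let A_W = ∑_{j∈W} A_j. Then ‖A_W Σ‖_∞ ≤ σ_0 · w(2s+1)/(p−S). -/
open MeasureTheory Matrix Real
open scoped ENNReal BigOperators NNReal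

/-!
The spectral norm is submultiplicative, so `A_W` and `Σ` may be bounded separately. By the Schur
test, a Hermitian matrix with entries of modulus at most `a` and at most `d` nonzero entries per
row has spectral norm at most `d * a`. A row has at most two entries at each lag, so this applies
to `A_W` with `d = 2 * w` and `a = 1 / (2 * (p - S))`, and to `Σ` with `d = 2 * s + 1` and
`a = σ_0`, since the entries of a positive semidefinite matrix are dominated by its diagonal.
-/

section SchurTest

open scoped Matrix.Norms.L2Operator

variable {𝕜 m n : Type*} [RCLike 𝕜] [Fintype n]

theorem sq_norm_mulVec_apply_le (A : Matrix m n 𝕜) (x : n → 𝕜) (i : m) :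
    ‖(A *ᵥ x) i‖ ^ 2 ≤ (∑ j, ‖A i j‖) * ∑ j, ‖A i j‖ * ‖x j‖ ^ 2 := by
  have hnorm : ‖(A *ᵥ x) i‖ ≤ ∑ j, ‖A i j‖ * ‖x j‖ :=
    norm_sum_le_of_le _ fun j _ ↦ norm_mul_le _ _
  calc ‖(A *ᵥ x) i‖ ^ 2
      ≤ (∑ j, ‖A i j‖ * ‖x j‖) ^ 2 := by gcongr
    _ ≤ (∑ j, ‖A i j‖) * ∑ j, ‖A i j‖ * ‖x j‖ ^ 2 :=
        Finset.sum_sq_le_sum_mul_sum_of_sq_le_mul _ (fun j _ ↦ by positivity)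
          (fun j _ ↦ by positivity) fun j _ ↦ le_of_eq (by ring)

variable [Fintype m]

theorem sum_sq_norm_mulVec_le {r c : ℝ} (hr : 0 ≤ r) {A : Matrix m n 𝕜}
    (hrow : ∀ i, ∑ j, ‖A i j‖ ≤ r) (hcol : ∀ j, ∑ i, ‖A i j‖ ≤ c) (x : n → 𝕜) :
    ∑ i, ‖(A *ᵥ x) i‖ ^ 2 ≤ r * c * ∑ j, ‖x j‖ ^ 2 :=
  calc ∑ i, ‖(A *ᵥ x) i‖ ^ 2
      ≤ ∑ i, r * ∑ j, ‖A i j‖ * ‖x j‖ ^ 2 := by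
        gcongr with i
        exact (sq_norm_mulVec_apply_le A x i).trans (by gcongr; exact hrow i)
    _ = r * ∑ j, (∑ i, ‖A i j‖) * ‖x j‖ ^ 2 := by
        simp_rw [← Finset.mul_sum, Finset.sum_mul]
        rw [Finset.sum_comm]
    _ ≤ r * ∑ j, c * ‖x j‖ ^ 2 := by
        gcongr with j
        exact hcol j
    _ = r * c * ∑ j, ‖x j‖ ^ 2 := by rw [← Finset.mul_sum, mul_assoc]

variable [DecidableEq n]

theorem l2_opNorm_le_sqrt_of_sum_norm_le {r c : ℝ} (hr : 0 ≤ r) {A : Matrix m n 𝕜}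
    (hrow : ∀ i, ∑ j, ‖A i j‖ ≤ r) (hcol : ∀ j, ∑ i, ‖A i j‖ ≤ c) : ‖A‖ ≤ √(r * c) := by
  refine ContinuousLinearMap.opNorm_le_bound _ (Real.sqrt_nonneg _) fun x ↦ ?_
  rw [EuclideanSpace.norm_eq, EuclideanSpace.norm_eq, ← Real.sqrt_mul' _ (by positivity)]
  exact Real.sqrt_le_sqrt (sum_sq_norm_mulVec_le hr hrow hcol x.ofLp)

theorem l2_opNorm_le_of_isHermitian_of_sum_norm_le {r : ℝ} (hr : 0 ≤ r) {A : Matrix n n 𝕜}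
    (hA : A.IsHermitian) (hrow : ∀ i, ∑ j, ‖A i j‖ ≤ r) : ‖A‖ ≤ r := by
  have hcol (j : n) : ∑ i, ‖A i j‖ ≤ r := by
    refine le_of_eq_of_le (Finset.sum_congr rfl fun i _ ↦ ?_) (hrow j)
    rw [← hA.apply i j, norm_star]
  simpa only [Real.sqrt_mul_self hr] using l2_opNorm_le_sqrt_of_sum_norm_le hr hrow hcol

theorem l2_opNorm_le_of_isHermitian_of_card_ne_zero_le {a : ℝ} (ha : 0 ≤ a) {d : ℕ}
    {A : Matrix n n 𝕜} (hA : A.IsHermitian) (hentry : ∀ i j, ‖A i j‖ ≤ a)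
    (hcard : ∀ i, {j | A i j ≠ 0}.ncard ≤ d) : ‖A‖ ≤ d * a := by
  classical
  refine l2_opNorm_le_of_isHermitian_of_sum_norm_le (by positivity) hA fun i ↦ ?_
  calc ∑ j, ‖A i j‖
      = ∑ j with A i j ≠ 0, ‖A i j‖ :=
        (Finset.sum_filter_of_ne fun j _ hj ↦ norm_ne_zero_iff.1 hj).symm
    _ ≤ (Finset.univ.filter fun j ↦ A i j ≠ 0).card • a :=
        Finset.sum_le_card_nsmul _ _ _ fun j _ ↦ hentry i j
    _ ≤ d * a := by
        rw [nsmul_eq_mul, ← Set.ncard_coe_finset, Finset.coe_filter_univ]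
        gcongr
        exact hcard i

end SchurTest

section PosSemidef

open scoped ComplexOrder

variable {𝕜 n : Type*} [RCLike 𝕜] {A : Matrix n n 𝕜}

theorem sq_norm_apply_le_of_posSemidef (hA : A.PosSemidef) (i j : n) :
    ‖A i j‖ ^ 2 ≤ RCLike.re (A i i) * RCLike.re (A j j) := by
  have hminor : 0 ≤ A i i * A j j - A i j * A j i := by
    simpa only [Matrix.det_fin_two, Matrix.submatrix_apply, Matrix.cons_val_zero,
      Matrix.cons_val_one] using (hA.submatrix ![i, j]).det_nonneg
  have hi := hA.isHermitian.coe_re_apply_self i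
  have hj := hA.isHermitian.coe_re_apply_self j
  rw [← hA.isHermitian.apply j i, RCLike.star_def, RCLike.mul_conj, ← hi, ← hj] at hminor
  exact sub_nonneg.1 (by exact_mod_cast hminor)

theorem norm_apply_le_of_posSemidef (hA : A.PosSemidef) {a : ℝ}
    (hdiag : ∀ i, RCLike.re (A i i) ≤ a) (i j : n) : ‖A i j‖ ≤ a := by
  have hnonneg (i : n) : 0 ≤ RCLike.re (A i i) := (RCLike.nonneg_iff.1 hA.diag_nonneg).1
  have ha : 0 ≤ a := (hnonneg i).trans (hdiag i)
  refine (sq_le_sq₀ (norm_nonneg _) ha).1 ?_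
  calc ‖A i j‖ ^ 2
      ≤ RCLike.re (A i i) * RCLike.re (A j j) := sq_norm_apply_le_of_posSemidef hA i j
    _ ≤ a * a := mul_le_mul (hdiag i) (hdiag j) (hnonneg j) ha
    _ = a ^ 2 := (sq a).symm

end PosSemidef

theorem ncard_natAbs_sub_mem_le {p : ℕ} (k : Fin p) (T : Finset ℕ) :
    {l : Fin p | ((k : ℤ) - (l : ℤ)).natAbs ∈ T}.ncard ≤ 2 * T.card := by
  let U : Finset ℤ := T.image (fun t : ℕ ↦ (k : ℤ) - t) ∪ T.image (fun t : ℕ ↦ (k : ℤ) + t)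
  have hmaps : ∀ l ∈ {l : Fin p | ((k : ℤ) - (l : ℤ)).natAbs ∈ T}, (l : ℤ) ∈ (U : Set ℤ) := by
    intro l hl
    rw [Finset.mem_coe, Finset.mem_union, Finset.mem_image, Finset.mem_image]
    rcases le_total (l : ℤ) k with hlk | hkl
    · exact .inl ⟨_, hl, by omega⟩
    · exact .inr ⟨_, hl, by omega⟩
  have hinj : Function.Injective fun l : Fin p ↦ (l : ℤ) :=
    Nat.cast_injective.comp Fin.val_injective
  calc {l : Fin p | ((k : ℤ) - (l : ℤ)).natAbs ∈ T}.ncard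
      ≤ (U : Set ℤ).ncard := Set.ncard_le_ncard_of_injOn _ hmaps hinj.injOn
    _ = U.card := Set.ncard_coe_finset U
    _ ≤ T.card + T.card :=
        (Finset.card_union_le _ _).trans (add_le_add Finset.card_image_le Finset.card_image_le)
    _ = 2 * T.card := (two_mul _).symm

section LagMatrix

open scoped Matrix.Norms.L2Operator

variable {p : ℕ}

theorem lagMatrix_isHermitian (p j : ℕ) : (lagMatrix p j).IsHermitian := by
  refine Matrix.IsHermitian.ext fun k l ↦ ?_
  simp only [lagMatrix, Matrix.of_apply, star_trivial]
  rw [← Int.natAbs_neg, neg_sub]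

theorem sum_lagMatrix_apply (W : Finset ℕ) (k l : Fin p) :
    (∑ j ∈ W, lagMatrix p j) k l =
      if ((k : ℤ) - (l : ℤ)).natAbs ∈ W
      then 1 / (2 * ((p : ℝ) - ((k : ℤ) - (l : ℤ)).natAbs)) else 0 := by
  simp only [Matrix.sum_apply, lagMatrix, Matrix.of_apply, Finset.sum_ite_eq]

theorem norm_sum_lagMatrix_apply_le {S : ℕ} (hSp : S < p) {W : Finset ℕ} (hW : ∀ j ∈ W, j ≤ S)
    (k l : Fin p) : ‖(∑ j ∈ W, lagMatrix p j) k l‖ ≤ 1 / (2 * ((p : ℝ) - S)) := by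
  have hpS : (0 : ℝ) < p - S := sub_pos.2 (Nat.cast_lt.2 hSp)
  rw [sum_lagMatrix_apply]
  split_ifs with hkl
  · have hle : (p : ℝ) - S ≤ p - ((k : ℤ) - (l : ℤ)).natAbs :=
      sub_le_sub_left (Nat.cast_le.2 (hW _ hkl)) _
    have hpos := hpS.trans_le hle
    rw [Real.norm_of_nonneg (by positivity)]
    gcongr
  · rw [norm_zero]
    positivity

theorem l2_opNorm_sum_lagMatrix_le {S : ℕ} (hSp : S < p) {W : Finset ℕ} (hW : ∀ j ∈ W, j ≤ S) :
    ‖∑ j ∈ W, lagMatrix p j‖ ≤ W.card / ((p : ℝ) - S) := by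
  have hpS : (0 : ℝ) < p - S := sub_pos.2 (Nat.cast_lt.2 hSp)
  have hherm : (∑ j ∈ W, lagMatrix p j).IsHermitian :=
    isSelfAdjoint_sum W fun j _ ↦ lagMatrix_isHermitian p j
  have hcard (k : Fin p) : {l | (∑ j ∈ W, lagMatrix p j) k l ≠ 0}.ncard ≤ 2 * W.card := by
    refine (Set.ncard_le_ncard fun l hl ↦ ?_).trans (ncard_natAbs_sub_mem_le k W)
    rw [Set.mem_ofPred_eq, sum_lagMatrix_apply] at hl
    exact (ite_ne_right_iff.1 hl).1
  calc ‖∑ j ∈ W, lagMatrix p j‖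
      ≤ (2 * W.card : ℕ) * (1 / (2 * ((p : ℝ) - S))) :=
        l2_opNorm_le_of_isHermitian_of_card_ne_zero_le (by positivity) hherm
          (norm_sum_lagMatrix_apply_le hSp hW) hcard
    _ = W.card / ((p : ℝ) - S) := by
        push_cast
        field_simp

theorem specNorm_eq_l2_opNorm (M : Matrix (Fin p) (Fin p) ℝ) : specNorm M = ‖M‖ := rfl

theorem lagMatrix_sum_mul_specNorm_bound_general {S d : ℕ} (hSp : S < p) {W : Finset ℕ}
    (hW : ∀ j ∈ W, j ≤ S) {a : ℝ} {C : Matrix (Fin p) (Fin p) ℝ} (hC : C.PosSemidef)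
    (hdiag : ∀ i, C i i ≤ a) (hcard : ∀ i, {j | C i j ≠ 0}.ncard ≤ d) :
    specNorm ((∑ j ∈ W, lagMatrix p j) * C) ≤ a * (W.card * d) / ((p : ℝ) - S) := by
  have hpS : (0 : ℝ) < p - S := sub_pos.2 (Nat.cast_lt.2 hSp)
  have ha : 0 ≤ a := hC.diag_nonneg.trans (hdiag ⟨S, hSp⟩)
  have hCnorm : ‖C‖ ≤ d * a :=
    l2_opNorm_le_of_isHermitian_of_card_ne_zero_le ha hC.isHermitian
      (norm_apply_le_of_posSemidef hC hdiag) hcard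
  rw [specNorm_eq_l2_opNorm]
  calc ‖(∑ j ∈ W, lagMatrix p j) * C‖
      ≤ ‖∑ j ∈ W, lagMatrix p j‖ * ‖C‖ := Matrix.l2_opNorm_mul _ _
    _ ≤ W.card / ((p : ℝ) - S) * (d * a) := by
        gcongr
        exact l2_opNorm_sum_lagMatrix_le hSp hW
    _ = a * (W.card * d) / ((p : ℝ) - S) := by ring

end LagMatrix

namespace memF

variable {p s S : ℕ} {σ σ0 : ℝ} {C : Matrix (Fin p) (Fin p) ℝ}

theorem apply_self (hC : memF p s S σ σ0 C) (i : Fin p) : C i i = σ0 := by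
  obtain ⟨-, v, hv0, hv, -⟩ := hC
  rw [hv, sub_self, Int.natAbs_zero, hv0]

theorem ncard_apply_ne_zero_le (hC : memF p s S σ σ0 C) (i : Fin p) :
    {j | C i j ≠ 0}.ncard ≤ 2 * s + 1 := by
  obtain ⟨-, v, -, hv, T, -, rfl, -, hvT⟩ := hC
  have hsub : {j | C i j ≠ 0} ⊆ insert i {j : Fin p | ((i : ℤ) - (j : ℤ)).natAbs ∈ T} := by
    intro j hj
    by_contra! hij
    rw [Set.mem_insert_iff, not_or, Set.mem_ofPred_eq] at hij
    refine hj ((hv i j).trans (hvT _ ?_ ?_ hij.2))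
    all_goals omega
  calc {j | C i j ≠ 0}.ncard
      ≤ (insert i {j : Fin p | ((i : ℤ) - (j : ℤ)).natAbs ∈ T}).ncard := Set.ncard_le_ncard hsub
    _ ≤ {j : Fin p | ((i : ℤ) - (j : ℤ)).natAbs ∈ T}.ncard + 1 := Set.ncard_insert_le _ _
    _ ≤ 2 * T.card + 1 := by
        gcongr
        exact ncard_natAbs_sub_mem_le i T

end memF

/-- Spectral norm bound for `A_W Σ`, `Σ ∈ F(s,S,σ)`. -/
theorem lagMatrix_sum_mul_specNorm_bound {p s S : ℕ} (hs : 1 ≤ s) (hsS : s ≤ S)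
    (hSp : S ≤ p - 1) (σ σ0 : ℝ) (hσ : 0 < σ) (hσ0 : 0 < σ0)
    (Cov : Matrix (Fin p) (Fin p) ℝ) (hCov : memF p s S σ σ0 Cov)
    (W : Finset ℕ) (hW : W ⊆ Finset.Icc 1 S) (hw : 1 ≤ W.card) :
    specNorm ((∑ j ∈ W, lagMatrix p j) * Cov) ≤
      σ0 * ((W.card : ℝ) * (2 * s + 1)) / ((p:ℝ) - S) := by
  have hbound := lagMatrix_sum_mul_specNorm_bound_general (by omega)
    (fun j hj ↦ (Finset.mem_Icc.1 (hW hj)).2) hCov.1.posSemidef (fun i ↦ (hCov.apply_self i).le)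
    hCov.ncard_apply_ne_zero_le
  exact_mod_cast hbound
end

section
/- Let 1 ≤ s ≤ S ≤ p−1, let Σ ∈ F(s,S,σ) have diagonal value σ_0 > 0, let W ⊆ {1,…,S} be a set of w > 1 elements, and let A_W = ∑_{j∈W} A_j. Then ‖A_W Σ‖_F² ≤ σ_0² · w(2s+1)²/(2(p−S)). -/
open MeasureTheory Matrix Real
open scoped ENNReal BigOperators NNReal

/-!
The Frobenius norm of `A_W` is explicit: the `A_j` have disjoint supports, `A_j` has at most
`2 (p - j)` nonzero entries, all equal to `1 / (2 (p - j))`, so `‖A_j‖_F² ≤ 1 / (2 (p - j))` and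
`‖A_W‖_F² ≤ w / (2 (p - S))`.

Multiplying by `Σ` costs at most the square of a common bound on the absolute row and column sums
of `Σ` (Schur's test). A row or column of `Σ` has at most `2 s + 1` nonzero entries, each bounded
by `σ₀` because the `2 × 2` principal minors of `Σ` are nonnegative.
-/

section SchurTest

variable {m n R : Type*} [Fintype m] [Fintype n] [NonUnitalSeminormedRing R]

theorem sum_sq_norm_vecMul_le (a : m → R) (C : Matrix m n R) {r c : ℝ} (hc : 0 ≤ c)
    (hrow : ∀ k, ∑ j, ‖C k j‖ ≤ r) (hcol : ∀ j, ∑ k, ‖C k j‖ ≤ c) :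
    ∑ j, ‖(a ᵥ* C) j‖ ^ 2 ≤ r * c * ∑ k, ‖a k‖ ^ 2 := by
  have cauchySchwarz (j : n) :
      (∑ k, ‖a k‖ * ‖C k j‖) ^ 2 ≤ (∑ k, ‖a k‖ ^ 2 * ‖C k j‖) * ∑ k, ‖C k j‖ :=
    Finset.sum_sq_le_sum_mul_sum_of_sq_le_mul _ (fun _ _ => by positivity)
      (fun _ _ => by positivity) fun _ _ => by apply le_of_eq; ring
  calc ∑ j, ‖(a ᵥ* C) j‖ ^ 2
      ≤ ∑ j, (∑ k, ‖a k‖ * ‖C k j‖) ^ 2 := by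
        gcongr with j
        exact norm_sum_le_of_le _ fun k _ => norm_mul_le _ _
    _ ≤ ∑ j, (∑ k, ‖a k‖ ^ 2 * ‖C k j‖) * c := by
        gcongr with j
        exact (cauchySchwarz j).trans (by gcongr; exact hcol j)
    _ = (∑ k, ‖a k‖ ^ 2 * ∑ j, ‖C k j‖) * c := by
        rw [← Finset.sum_mul, Finset.sum_comm]
        simp_rw [Finset.mul_sum]
    _ ≤ (∑ k, ‖a k‖ ^ 2 * r) * c := by
        gcongr with k
        exact hrow k
    _ = r * c * ∑ k, ‖a k‖ ^ 2 := by
        rw [← Finset.sum_mul]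
        ring

end SchurTest

section FrobNorm

variable {p : ℕ}

theorem sq_frobNorm (M : Matrix (Fin p) (Fin p) ℝ) : frobNorm M ^ 2 = ∑ i, ∑ j, M i j ^ 2 :=
  Real.sq_sqrt (by positivity)

theorem sq_frobNorm_mul_le (A C : Matrix (Fin p) (Fin p) ℝ) {r c : ℝ} (hc : 0 ≤ c)
    (hrow : ∀ k, ∑ j, ‖C k j‖ ≤ r) (hcol : ∀ j, ∑ k, ‖C k j‖ ≤ c) :
    frobNorm (A * C) ^ 2 ≤ r * c * frobNorm A ^ 2 := by
  rw [sq_frobNorm, sq_frobNorm, Finset.mul_sum]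
  refine Finset.sum_le_sum fun i _ => ?_
  simpa only [Matrix.mul_apply_eq_vecMul, Real.norm_eq_abs, sq_abs] using
    sum_sq_norm_vecMul_le (A i) C hc hrow hcol

end FrobNorm

section Lag

open Finset

variable {p : ℕ}

/-- The lag `|i - j|` of a matrix position, through which the supports of `A_j` and of the matrices
in `F(s,S,σ)` are described. Written as in `lagMatrix` and `memF`, so that it unfolds to the
expressions there. -/
def lag (i j : Fin p) : ℕ := ((i : ℤ) - (j : ℤ)).natAbs

theorem lag_comm (i j : Fin p) : lag i j = lag j i := by
  simp only [lag]
  omega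

theorem lag_eq_zero_iff {i j : Fin p} : lag i j = 0 ↔ i = j := by
  simp only [lag, Fin.ext_iff]
  omega

theorem card_lag_eq_le_two (i : Fin p) (t : ℕ) : #{k | lag i k = t} ≤ 2 := by
  refine card_le_card_of_injOn (t := (univ : Finset Bool)) (fun k => decide (i < k))
    (fun _ _ => mem_univ _) fun k hk l hl hkl => ?_
  rw [mem_coe, mem_filter_univ, lag] at hk hl
  simp only [decide_eq_decide, Fin.lt_def] at hkl
  omega

theorem card_lag_mem_insert_zero_le (i : Fin p) (T : Finset ℕ) :
    #{k | lag i k ∈ insert 0 T} ≤ 2 * #T + 1 := by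
  have hT : #{k | lag i k ∈ T} ≤ 2 * #T := by
    refine card_le_mul_card_image_of_maps_to (f := lag i) (by simp) 2 fun t _ => ?_
    exact (card_le_card (filter_subset_filter _ (filter_subset _ _))).trans
      (card_lag_eq_le_two i t)
  have hzero : #{k | lag i k = 0} = 1 := by
    simp only [lag_eq_zero_iff, filter_eq, mem_univ, if_true, card_singleton]
  simp only [mem_insert, filter_or]
  exact (card_union_le _ _).trans (by omega)

theorem card_pairs_lag_eq_le (p j : ℕ) :
    #{x : Fin p × Fin p | lag x.1 x.2 = j} ≤ 2 * (p - j) := by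
  -- A pair at lag `j` is determined by its order and by its smaller element, which is `< p - j`.
  have hcard : #((univ : Finset Bool) ×ˢ range (p - j)) = 2 * (p - j) := by simp
  rw [← hcard]
  refine card_le_card_of_injOn (fun x => (decide (x.1 < x.2), min (x.1 : ℕ) x.2)) ?_ ?_
  · rintro ⟨a, b⟩ hab
    rw [mem_coe, mem_filter_univ] at hab
    simp only [lag] at hab
    simp only [coe_product, Set.mem_prod, mem_coe, mem_univ, true_and, mem_range]
    omega
  · rintro ⟨a, b⟩ hab ⟨c, d⟩ hcd heq
    rw [mem_coe, mem_filter_univ] at hab hcd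
    simp only [lag] at hab hcd
    simp only [Prod.mk.injEq, decide_eq_decide, Fin.lt_def] at heq
    simp only [Prod.mk.injEq, Fin.ext_iff]
    omega

theorem sum_norm_le_of_lag_support {E : Type*} [SeminormedAddGroup E] (i : Fin p) {T : Finset ℕ}
    {f : Fin p → E} {M : ℝ} (hM : ∀ k, ‖f k‖ ≤ M) (hf : ∀ k, lag i k ∉ insert 0 T → f k = 0) :
    ∑ k, ‖f k‖ ≤ (2 * #T + 1) * M := by
  have hM₀ : 0 ≤ M := (norm_nonneg _).trans (hM i)
  calc ∑ k, ‖f k‖ = ∑ k with lag i k ∈ insert 0 T, ‖f k‖ := by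
        refine (sum_filter_of_ne fun k _ hk => ?_).symm
        contrapose! hk
        rw [hf k hk, norm_zero]
    _ ≤ #{k | lag i k ∈ insert 0 T} * M := by
        rw [← nsmul_eq_mul]
        exact sum_le_card_nsmul _ _ _ fun k _ => hM k
    _ ≤ (2 * #T + 1) * M := by
        gcongr
        exact_mod_cast card_lag_mem_insert_zero_le i T

end Lag

section LagMatrix

variable {p : ℕ}

theorem lagMatrix_apply (j : ℕ) (k l : Fin p) :
    lagMatrix p j k l = if lag k l = j then 1 / (2 * ((p : ℝ) - j)) else 0 := rfl

theorem sq_frobNorm_lagMatrix_le {j : ℕ} (hj : j < p) :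
    frobNorm (lagMatrix p j) ^ 2 ≤ 1 / (2 * ((p : ℝ) - j)) := by
  have hpj : (0 : ℝ) < p - j := sub_pos.2 (by exact_mod_cast hj)
  have hcard : ((Finset.univ.filter fun x : Fin p × Fin p => lag x.1 x.2 = j).card : ℝ) ≤
      2 * ((p : ℝ) - j) := by
    rw [← Nat.cast_sub hj.le]
    exact_mod_cast card_pairs_lag_eq_le p j
  calc frobNorm (lagMatrix p j) ^ 2
      = (Finset.univ.filter fun x : Fin p × Fin p => lag x.1 x.2 = j).card *
          (1 / (2 * ((p : ℝ) - j))) ^ 2 := by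
        rw [sq_frobNorm, ← Fintype.sum_prod_type']
        simp only [lagMatrix_apply, ite_pow, zero_pow two_ne_zero, ← Finset.sum_filter,
          Finset.sum_const, nsmul_eq_mul]
    _ ≤ 2 * ((p : ℝ) - j) * (1 / (2 * ((p : ℝ) - j))) ^ 2 := by gcongr
    _ = 1 / (2 * ((p : ℝ) - j)) := by field_simp

theorem sq_frobNorm_sum_lagMatrix (W : Finset ℕ) :
    frobNorm (∑ j ∈ W, lagMatrix p j) ^ 2 = ∑ j ∈ W, frobNorm (lagMatrix p j) ^ 2 := by
  have disjoint_supports (k l : Fin p) :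
      ((∑ j ∈ W, lagMatrix p j) k l) ^ 2 = ∑ j ∈ W, lagMatrix p j k l ^ 2 := by
    simp only [Matrix.sum_apply, lagMatrix_apply, ite_pow, zero_pow two_ne_zero,
      Finset.sum_ite_eq]
  simp_rw [sq_frobNorm, disjoint_supports, Finset.sum_comm (t := W)]

theorem sq_frobNorm_sum_lagMatrix_le {S : ℕ} (hSp : S < p) {W : Finset ℕ} (hW : ∀ j ∈ W, j ≤ S) :
    frobNorm (∑ j ∈ W, lagMatrix p j) ^ 2 ≤ W.card / (2 * ((p : ℝ) - S)) := by
  have hpS : (0 : ℝ) < p - S := sub_pos.2 (by exact_mod_cast hSp)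
  rw [sq_frobNorm_sum_lagMatrix, div_eq_mul_one_div, ← nsmul_eq_mul]
  refine Finset.sum_le_card_nsmul _ _ _ fun j hj => ?_
  refine (sq_frobNorm_lagMatrix_le ((hW j hj).trans_lt hSp)).trans ?_
  gcongr
  exact hW j hj

end LagMatrix

open scoped ComplexOrder in
theorem mul_apply_swap_le_of_posSemidef {n 𝕜 : Type*} [RCLike 𝕜] {C : Matrix n n 𝕜}
    (hC : C.PosSemidef) (i j : n) : C i j * C j i ≤ C i i * C j j := by
  have hminor := (hC.submatrix ![i, j]).det_nonneg
  rw [Matrix.det_fin_two] at hminor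
  exact sub_nonneg.1 hminor

section MemF

variable {p s S : ℕ} {σ σ0 : ℝ} {C : Matrix (Fin p) (Fin p) ℝ}

theorem memF.norm_apply_le (hC : memF p s S σ σ0 C) (i j : Fin p) : ‖C i j‖ ≤ σ0 := by
  obtain ⟨hpos, v, hv, hCv, -⟩ := hC
  have hdiag (k : Fin p) : C k k = σ0 := by simp [hCv, hv]
  have hswap : C j i = C i j := hpos.isHermitian.apply i j
  have hσ0 : 0 ≤ σ0 := hdiag i ▸ hpos.posSemidef.diag_nonneg
  have hminor := mul_apply_swap_le_of_posSemidef hpos.posSemidef i j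
  rw [hdiag, hdiag, hswap] at hminor
  exact abs_le_of_sq_le_sq (by simpa only [sq] using hminor) hσ0

theorem memF.exists_lag_support (hC : memF p s S σ σ0 C) :
    ∃ T : Finset ℕ, T.card = s ∧ ∀ i j, lag i j ∉ insert 0 T → C i j = 0 := by
  obtain ⟨-, v, -, hCv, T, -, hT, -, hzero⟩ := hC
  refine ⟨T, hT, fun i j hij => ?_⟩
  rw [Finset.mem_insert, not_or] at hij
  have hlt : lag i j ≤ p - 1 := by
    simp only [lag]
    omega
  exact (hCv i j).trans (hzero _ (Nat.one_le_iff_ne_zero.2 hij.1) hlt hij.2)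

end MemF

theorem lagMatrix_sum_mul_frobNorm_bound_general {p S : ℕ} (hSp : S < p)
    {C : Matrix (Fin p) (Fin p) ℝ} {M : ℝ} (hM : ∀ i j, ‖C i j‖ ≤ M) {T : Finset ℕ}
    (hT : ∀ i j, lag i j ∉ insert 0 T → C i j = 0) {W : Finset ℕ} (hW : ∀ j ∈ W, j ≤ S) :
    frobNorm ((∑ j ∈ W, lagMatrix p j) * C) ^ 2 ≤
      M ^ 2 * (W.card * (2 * T.card + 1) ^ 2) / (2 * ((p : ℝ) - S)) := by
  have hM₀ : 0 ≤ M := (norm_nonneg _).trans (hM ⟨S, hSp⟩ ⟨S, hSp⟩)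
  have hrow (k : Fin p) : ∑ j, ‖C k j‖ ≤ (2 * T.card + 1) * M :=
    sum_norm_le_of_lag_support k (hM k) (hT k)
  have hcol (j : Fin p) : ∑ k, ‖C k j‖ ≤ (2 * T.card + 1) * M :=
    sum_norm_le_of_lag_support j (hM · j) fun k hk => hT k j (lag_comm j k ▸ hk)
  calc frobNorm ((∑ j ∈ W, lagMatrix p j) * C) ^ 2
      ≤ (2 * T.card + 1) * M * ((2 * T.card + 1) * M) * frobNorm (∑ j ∈ W, lagMatrix p j) ^ 2 :=
        sq_frobNorm_mul_le _ C (by positivity) hrow hcol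
    _ ≤ (2 * T.card + 1) * M * ((2 * T.card + 1) * M) * (W.card / (2 * ((p : ℝ) - S))) := by
        gcongr
        exact sq_frobNorm_sum_lagMatrix_le hSp hW
    _ = M ^ 2 * (W.card * (2 * T.card + 1) ^ 2) / (2 * ((p : ℝ) - S)) := by ring

/-- Frobenius norm bound for `A_W Σ`, `Σ ∈ F(s,S,σ)`, `w > 1`. -/
theorem lagMatrix_sum_mul_frobNorm_bound {p s S : ℕ} (hs : 1 ≤ s) (hsS : s ≤ S)
    (hSp : S ≤ p - 1) (σ σ0 : ℝ) (hσ : 0 < σ) (hσ0 : 0 < σ0)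
    (Cov : Matrix (Fin p) (Fin p) ℝ) (hCov : memF p s S σ σ0 Cov)
    (W : Finset ℕ) (hW : W ⊆ Finset.Icc 1 S) (hw : 1 < W.card) :
    (frobNorm ((∑ j ∈ W, lagMatrix p j) * Cov))^2 ≤
      σ0^2 * ((W.card : ℝ) * (2 * s + 1)^2) / (2 * ((p:ℝ) - S)) := by
  obtain ⟨T, rfl, hT⟩ := hCov.exists_lag_support
  exact lagMatrix_sum_mul_frobNorm_bound_general (by omega) hCov.norm_apply_le hT
    fun j hj => (Finset.mem_Icc.1 (hW hj)).2
end

section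
/- Let Σ be a symmetric p×p real matrix whose entries satisfy |σ_{i,m}| ≤ σ_0 for all i,m, for some σ_0 ≥ 0, and let 1 ≤ j ≤ p−1. Then Tr(A_j² Σ) ≤ σ_0/(p−j) if j < p/2, and Tr(A_j² Σ) ≤ σ_0/(2(p−j)) if j ≥ p/2. -/
open MeasureTheory Matrix Real
open scoped ENNReal BigOperators NNReal

/-!
The entries of `A_j²` are nonnegative, so `Tr(A_j² Σ)` is at most `σ0` times their sum
`∑ i, ∑ k, A_j i k * ∑ m, A_j k m`. Hence it is at most `σ0 r` as soon as every row of `A_j` sums to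
at most `r` and all entries of `A_j` together sum to at most `1`. Both sums count pairs at distance
`j`: there are at most `2 (p - j)` such pairs `(k, l)`, and a fixed `k` has at most the two partners
`k ± j`, of which at most one lies in range if `p ≤ 2 j`.
-/

section EntrySums

variable {l m n R : Type*} [Fintype m] [Fintype n]
  [Semiring R] [PartialOrder R] [IsOrderedRing R]

theorem trace_mul_le_sum_mul_of_le {M : Matrix m n R} {N : Matrix n m R} {c : R}
    (hM : ∀ i j, 0 ≤ M i j) (hN : ∀ i j, N i j ≤ c) :
    trace (M * N) ≤ (∑ i, ∑ j, M i j) * c := by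
  simp only [trace, diag_apply, mul_apply, Finset.sum_mul]
  gcongr with i _ j _
  · exact hM i j
  · exact hN j i

theorem sum_sum_mul_apply_le_of_row_sum_le [Fintype l] {A : Matrix l m R} {B : Matrix m n R} {r : R}
    (hA : ∀ i k, 0 ≤ A i k) (hB : ∀ k, ∑ j, B k j ≤ r) :
    ∑ i, ∑ j, (A * B) i j ≤ (∑ i, ∑ k, A i k) * r := by
  have row_sum_mul (i : l) : ∑ j, (A * B) i j = ∑ k, A i k * ∑ j, B k j := by
    simp only [mul_apply, Finset.mul_sum]
    exact Finset.sum_comm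
  simp only [row_sum_mul, Finset.sum_mul]
  gcongr with i _ k _
  · exact hA i k
  · exact hB k

end EntrySums

/-- The indices at distance exactly `j` from `k`, i.e. the support of the `k`-th row of `A_j`. -/
def lagNeighbors {p : ℕ} (j : ℕ) (k : Fin p) : Finset (Fin p) :=
  {l | ((k : ℤ) - (l : ℤ)).natAbs = j}

section Counting

variable {p j : ℕ}

theorem mem_lagNeighbors {k l : Fin p} :
    l ∈ lagNeighbors j k ↔ ((k : ℤ) - (l : ℤ)).natAbs = j := by
  simp [lagNeighbors]

theorem card_lagNeighbors_le_two (k : Fin p) : (lagNeighbors j k).card ≤ 2 := by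
  rw [← Fintype.card_bool, ← Finset.card_univ]
  refine Finset.card_le_card_of_injOn (fun l ↦ decide (k < l)) (fun _ _ ↦ Finset.mem_univ _) ?_
  intro l hl l' hl' hside
  simp only [Finset.mem_coe, mem_lagNeighbors, decide_eq_decide] at hl hl' hside
  omega

theorem card_lagNeighbors_le_one (hpj : p ≤ 2 * j) (k : Fin p) :
    (lagNeighbors j k).card ≤ 1 := by
  refine Finset.card_le_one.2 fun l hl l' hl' ↦ ?_
  rw [mem_lagNeighbors] at hl hl'
  omega

-- A pair at distance `j` is determined by its order and its smaller member, which is below `p - j`.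
theorem sum_card_lagNeighbors_le :
    ∑ k : Fin p, (lagNeighbors j k).card ≤ (p - j) * 2 := by
  rw [← Finset.card_sigma, ← Fintype.card_bool, ← Finset.card_univ, ← Finset.card_range (p - j),
    ← Finset.card_product]
  refine Finset.card_le_card_of_injOn (fun x ↦ (min (x.1 : ℕ) x.2, decide (x.1 < x.2))) ?_ ?_
  · rintro ⟨k, l⟩ hkl
    simp only [Finset.mem_coe, Finset.mem_sigma, Finset.mem_univ, mem_lagNeighbors, true_and,
      Finset.mem_product, Finset.mem_range, and_true] at hkl ⊢
    omega
  · rintro ⟨k, l⟩ hkl ⟨k', l'⟩ hkl' heq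
    simp only [Finset.mem_coe, Finset.mem_sigma, Finset.mem_univ, mem_lagNeighbors, true_and,
      Prod.mk.injEq, decide_eq_decide] at hkl hkl' heq
    obtain rfl : k = k' := by omega
    obtain rfl : l = l' := by omega
    rfl

end Counting

section LagMatrix

variable {p j : ℕ}

theorem lagMatrix_apply_nonneg (hj : j ≤ p) (k l : Fin p) : 0 ≤ lagMatrix p j k l := by
  have hgap : (0 : ℝ) ≤ p - j := sub_nonneg.2 (mod_cast hj)
  simp only [lagMatrix, of_apply]
  split_ifs <;> positivity

theorem sum_lagMatrix_row (k : Fin p) :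
    ∑ l, lagMatrix p j k l = (lagNeighbors j k).card / (2 * ((p : ℝ) - j)) := by
  simp only [lagMatrix, of_apply, lagNeighbors, ← Finset.sum_filter, Finset.sum_const,
    nsmul_eq_mul, mul_one_div]

theorem sum_sum_lagMatrix_le_one (hj : j ≤ p) : ∑ k, ∑ l, lagMatrix p j k l ≤ 1 := by
  have hgap : (0 : ℝ) ≤ p - j := sub_nonneg.2 (mod_cast hj)
  have hcard : ∑ k : Fin p, ((lagNeighbors j k).card : ℝ) ≤ 2 * (p - j) := by
    rw [mul_comm, ← Nat.cast_sub hj]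
    exact_mod_cast sum_card_lagNeighbors_le
  simp only [sum_lagMatrix_row, ← Finset.sum_div]
  exact div_le_one_of_le₀ hcard (by positivity)

theorem trace_lagMatrix_sq_mul_le {Cov : Matrix (Fin p) (Fin p) ℝ} {σ0 : ℝ} {d : ℕ}
    (hj : j ≤ p) (hσ0 : 0 ≤ σ0) (hbd : ∀ i m, Cov i m ≤ σ0)
    (hd : ∀ k : Fin p, (lagNeighbors j k).card ≤ d) :
    trace ((lagMatrix p j) ^ 2 * Cov) ≤ d / (2 * ((p : ℝ) - j)) * σ0 := by
  have hgap : (0 : ℝ) ≤ p - j := sub_nonneg.2 (mod_cast hj)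
  have hnonneg := lagMatrix_apply_nonneg hj
  have hrow (k : Fin p) : ∑ l, lagMatrix p j k l ≤ d / (2 * ((p : ℝ) - j)) := by
    rw [sum_lagMatrix_row]
    gcongr
    exact hd k
  have hsq (i m : Fin p) : 0 ≤ (lagMatrix p j * lagMatrix p j) i m := by
    rw [mul_apply]
    exact Finset.sum_nonneg fun k _ ↦ mul_nonneg (hnonneg i k) (hnonneg k m)
  rw [pow_two]
  calc trace (lagMatrix p j * lagMatrix p j * Cov)
      ≤ (∑ i, ∑ m, (lagMatrix p j * lagMatrix p j) i m) * σ0 :=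
        trace_mul_le_sum_mul_of_le hsq hbd
    _ ≤ (∑ i, ∑ k, lagMatrix p j i k) * (d / (2 * ((p : ℝ) - j))) * σ0 := by
        gcongr
        exact sum_sum_mul_apply_le_of_row_sum_le hnonneg hrow
    _ ≤ d / (2 * ((p : ℝ) - j)) * σ0 := by
        gcongr
        exact mul_le_of_le_one_left (by positivity) (sum_sum_lagMatrix_le_one hj)

theorem trace_lagMatrix_sq_bound_general {Cov : Matrix (Fin p) (Fin p) ℝ} {σ0 : ℝ}
    (hσ0 : 0 ≤ σ0) (hbd : ∀ i m, Cov i m ≤ σ0) (hj : j < p) :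
    trace ((lagMatrix p j) ^ 2 * Cov) ≤ σ0 / ((p : ℝ) - j) ∧
      ((p : ℝ) / 2 ≤ j → trace ((lagMatrix p j) ^ 2 * Cov) ≤ σ0 / (2 * ((p : ℝ) - j))) := by
  have hgap : (p : ℝ) - j ≠ 0 := sub_ne_zero.2 (mod_cast hj.ne')
  refine ⟨?_, fun hpj ↦ ?_⟩
  · refine (trace_lagMatrix_sq_mul_le hj.le hσ0 hbd card_lagNeighbors_le_two).trans_eq ?_
    push_cast
    field_simp
  · have hpj' : p ≤ 2 * j := by
      rw [div_le_iff₀' two_pos] at hpj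
      exact_mod_cast hpj
    refine (trace_lagMatrix_sq_mul_le hj.le hσ0 hbd (card_lagNeighbors_le_one hpj')).trans_eq ?_
    rw [Nat.cast_one, one_div_mul_eq_div]

end LagMatrix

/-- Bound on `Tr(A_j² Σ)` for a symmetric matrix with entries
bounded by `σ0`. -/
theorem trace_lagMatrix_sq_bound {p : ℕ} (Cov : Matrix (Fin p) (Fin p) ℝ)
    (hCov : Cov.IsSymm) (σ0 : ℝ) (hσ0 : 0 ≤ σ0) (hbd : ∀ i m, |Cov i m| ≤ σ0)
    (j : ℕ) (hj1 : 1 ≤ j) (hjp : j ≤ p - 1) :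
    ((j : ℝ) < (p:ℝ)/2 →
      Matrix.trace ((lagMatrix p j)^2 * Cov) ≤ σ0 / ((p:ℝ) - j)) ∧
    ((p:ℝ)/2 ≤ (j : ℝ) →
      Matrix.trace ((lagMatrix p j)^2 * Cov) ≤ σ0 / (2 * ((p:ℝ) - j))) := by
  have hbounds := trace_lagMatrix_sq_bound_general hσ0 (fun i m ↦ le_of_abs_le (hbd i m))
    (show j < p by omega)
  exact ⟨fun _ ↦ hbounds.1, hbounds.2⟩
end
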